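/- Let k be an algebraically closed field, A a finitely generated integral domain over k with a 𝔾ₐ-coaction β, and h ∈ A^{𝔾ₐ} nonzero. The following are equivalent: (a) there exists a k-algebra isomorphism φ from the polynomial ring (A_h)^{𝔾ₐ}[T] onto A_h that restricts to the inclusion on (A_h)^{𝔾ₐ} and satisfies β_h(φ(T)) = φ(T) + t in A_h[t] (i.e. the open subvariety D(h) of Spec A is a trivial 𝔾ₐ-bundle over D(h)//𝔾ₐ); (b) there exist g ∈ A and e ∈ ℕ such that β(g) = g + t·h^e, i.e. (g, h^e) is a principle pair. -/

import Mathlib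

open Polynomial

/-- Substitute `t ↦ t₁ + t₂` into a polynomial, landing in `R[t₁][t₂]`
(inner variable `t₁`, outer variable `t₂`). -/
noncomputable def coaddSubst {R : Type*} [CommSemiring R] (p : Polynomial R) :
    Polynomial (Polynomial R) :=
  p.eval₂ ((Polynomial.C : Polynomial R →+* Polynomial (Polynomial R)).comp
      (Polynomial.C : R →+* Polynomial R))
    (Polynomial.C Polynomial.X + Polynomial.X)

/-- A 𝔾ₐ-coaction on a commutative `k`-algebra `A`: a `k`-algebra homomorphism
`β : A → A[t]` satisfying the counit and coassociativity axioms. -/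
def IsGaCoaction {k A : Type*} [CommSemiring k] [CommSemiring A] [Algebra k A]
    (β : A →ₐ[k] Polynomial A) : Prop :=
  (∀ a : A, (β a).eval 0 = a) ∧
  (∀ a : A, coaddSubst (β a) = (β a).map β.toRingHom)

/-- `c(t) ∈ k[t]` is additive: `c(t₁+t₂) = c(t₁) + c(t₂)` in `k[t₁][t₂]`. -/
def IsAdditivePoly {k : Type*} [CommSemiring k] (c : Polynomial k) : Prop :=
  coaddSubst c = Polynomial.C c + c.map (Polynomial.C : k →+* Polynomial k)

/-!
A slice `s`, i.e. an element with `β s = s + t`, trivialises a coaction: `a ↦ β(a)|_{t = -s}`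
retracts `A` onto the invariants, and applying this retraction to the coefficients of `β(a)` and
then setting `t = s` gives back `β(a)|_{t = -s + s} = a` by coassociativity, which writes `a` as a
polynomial in `s` with invariant coefficients. Slices of `A_h` are the fractions `g / h ^ e` with
`β g = g + t h ^ e`, once `g` is multiplied by a further power of `h` to absorb the kernel of
`A → A_h`.
-/

section Coaction

variable {k A : Type*} [CommSemiring k] [CommSemiring A] [Algebra k A]

/-- The algebra `A^{𝔾ₐ}` of invariants of a coaction, as the equalizer of `β` and the inclusion of
constants. -/
noncomputable abbrev gaInvariants (β : A →ₐ[k] A[X]) : Subalgebra k A :=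
  AlgHom.equalizer β CAlgHom

/-- A slice of a coaction: an element on which `𝔾ₐ` acts by translation. It is the first member of
a principle pair whose second member is `1`. -/
def IsSlice (β : A →ₐ[k] A[X]) (s : A) : Prop :=
  β s = C s + X

/-- The pair `(g, h)` is a principle pair of the coaction `β`. Invariance of `h` is not a separate
clause: it is coassociativity at `g`, read off in degree one. -/
def IsPrinciplePair (β : A →ₐ[k] A[X]) (g h : A) : Prop :=
  β g = C g + X * C h

theorem eval_coaddSubst (p q : A[X]) : (coaddSubst p).eval q = p.comp (X + q) := by
  have hC : (evalRingHom q).comp (C.comp C) = (C : A →+* A[X]) := by ext; simp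
  rw [coaddSubst, ← coe_evalRingHom, hom_eval₂, hC]
  simp [comp]

variable {β : A →ₐ[k] A[X]}

theorem IsGaCoaction.eval₂_eq_comp (hβ : IsGaCoaction β) (a : A) (q : A[X]) :
    (β a).eval₂ β.toRingHom q = (β a).comp (X + q) := by
  rw [← eval_map, ← hβ.2, eval_coaddSubst]

theorem IsGaCoaction.apply_eval (hβ : IsGaCoaction β) (a b : A) :
    β ((β a).eval b) = (β a).comp (X + β b) :=
  (hom_eval₂ (β a) (RingHom.id A) β.toRingHom b).trans (hβ.eval₂_eq_comp a (β b))

theorem IsPrinciplePair.isSlice_mul_inv {g : A} {u : Aˣ} (hg : IsPrinciplePair β g u)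
    (hu : β u = C (u : A)) : IsSlice β (g * ↑u⁻¹) := by
  have hu_inv : β ↑u⁻¹ = C (↑u⁻¹ : A) := by
    refine (u.isUnit.map C).mul_left_cancel ?_
    rw [← hu, ← map_mul, hu, ← C_mul, u.mul_inv, map_one, C_1]
  rw [IsSlice, map_mul, hg, hu_inv, add_mul, mul_assoc, ← C_mul, ← C_mul, u.mul_inv, C_1, mul_one]

end Coaction

section Slice

variable {k A : Type*} [CommSemiring k] [CommRing A] [Algebra k A] {β : A →ₐ[k] A[X]} {s : A}

theorem IsSlice.eval_neg_mem_gaInvariants (hs : IsSlice β s) (hβ : IsGaCoaction β) (a : A) :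
    (β a).eval (-s) ∈ gaInvariants β := by
  have translate_neg : X + β (-s) = C (-s) := by
    rw [map_neg, hs, C_neg]
    ring
  rw [AlgHom.mem_equalizer, hβ.apply_eval, translate_neg, comp_C, CAlgHom_apply]

/-- The Dixmier map of a slice `s`: the retraction `a ↦ β(a)|_{t = -s}` of `A` onto its
invariants. -/
noncomputable def IsSlice.dixmierMap (hs : IsSlice β s) (hβ : IsGaCoaction β) :
    A →ₐ[k] gaInvariants β :=
  (((aeval (-s) : A[X] →ₐ[A] A).restrictScalars k).comp β).codRestrict _ fun a ↦
    hs.eval_neg_mem_gaInvariants hβ a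

theorem IsSlice.coe_dixmierMap (hs : IsSlice β s) (hβ : IsGaCoaction β) (a : A) :
    (hs.dixmierMap hβ a : A) = (β a).eval (-s) :=
  congr_fun (coe_aeval_eq_eval (-s)) (β a)

theorem IsSlice.dixmierMap_self (hs : IsSlice β s) (hβ : IsGaCoaction β) :
    hs.dixmierMap hβ s = 0 :=
  Subtype.ext <| by
    rw [coe_dixmierMap, hs, eval_add, eval_C, eval_X, add_neg_cancel, ZeroMemClass.coe_zero]

theorem IsSlice.dixmierMap_coe (hs : IsSlice β s) (hβ : IsGaCoaction β) (x : gaInvariants β) :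
    hs.dixmierMap hβ x = x :=
  Subtype.ext <| by rw [coe_dixmierMap, show β x = C (x : A) from x.2, eval_C]

theorem IsSlice.aeval_map_dixmierMap (hs : IsSlice β s) (hβ : IsGaCoaction β) (a : A) :
    aeval s ((β a).map (hs.dixmierMap hβ).toRingHom) = a := by
  have coe_comp : (algebraMap (gaInvariants β) A).comp (hs.dixmierMap hβ).toRingHom =
      (evalRingHom (-s)).comp β.toRingHom :=
    RingHom.ext (hs.coe_dixmierMap hβ)
  calc aeval s ((β a).map (hs.dixmierMap hβ).toRingHom)
      = (β a).eval₂ ((evalRingHom (-s)).comp β.toRingHom) s := by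
        rw [aeval_def, eval₂_map, coe_comp]
    _ = ((β a).eval₂ β.toRingHom (C s)).eval (-s) := by
        rw [← coe_evalRingHom, hom_eval₂, coe_evalRingHom, eval_C]
    _ = (β a).eval 0 := by
        rw [hβ.eval₂_eq_comp, eval_comp, eval_add, eval_X, eval_C, neg_add_cancel]
    _ = a := hβ.1 a

/-- The trivialisation `A^{𝔾ₐ}[T] ≃ A` sending `T` to a slice. -/
noncomputable def IsSlice.polynomialEquiv (hs : IsSlice β s) (hβ : IsGaCoaction β) :
    (gaInvariants β)[X] ≃ₐ[k] A :=
  AlgEquiv.ofAlgHom ((aeval s).restrictScalars k) ((mapAlgHom (hs.dixmierMap hβ)).comp β)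
    (AlgHom.ext (hs.aeval_map_dixmierMap hβ))
    (algHom_ext'
      (AlgHom.ext fun x ↦ by
        simp [show β x = C (x : A) from x.2, hs.dixmierMap_coe hβ])
      (by simp [show β s = C s + X from hs, hs.dixmierMap_self hβ]))

theorem IsSlice.polynomialEquiv_apply (hs : IsSlice β s) (hβ : IsGaCoaction β)
    (p : (gaInvariants β)[X]) : hs.polynomialEquiv hβ p = aeval s p :=
  rfl

theorem IsGaCoaction.exists_algEquiv_iff_exists_isSlice (hβ : IsGaCoaction β) :
    (∃ φ : (gaInvariants β)[X] ≃ₐ[k] A,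
      (∀ x : gaInvariants β, φ (C x) = x) ∧ IsSlice β (φ X)) ↔ ∃ s, IsSlice β s := by
  constructor
  · rintro ⟨φ, -, hφ⟩
    exact ⟨φ X, hφ⟩
  · rintro ⟨s, hs⟩
    refine ⟨hs.polynomialEquiv hβ, fun x ↦ ?_, ?_⟩
    · exact aeval_C s x
    · rwa [hs.polynomialEquiv_apply, aeval_X]

end Slice

section Localization

variable {A S : Type*} [CommSemiring A] [CommSemiring S] [Algebra A S]

theorem exists_C_pow_mul_eq_of_map_algebraMap_eq (h : A) [IsLocalization.Away h S] {p q : A[X]}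
    (hpq : p.map (algebraMap A S) = q.map (algebraMap A S)) :
    ∃ n : ℕ, C (h ^ n) * p = C (h ^ n) * q := by
  let := Polynomial.algebra A S
  have := Polynomial.isLocalization (Submonoid.powers h) S
  obtain ⟨⟨-, -, ⟨n, rfl⟩, rfl⟩, hn⟩ :=
    IsLocalization.exists_of_eq (M := (Submonoid.powers h).map C) (S := S[X]) hpq
  exact ⟨n, hn⟩

variable {k : Type*} [CommSemiring k] [Algebra k A] [Algebra k S]

theorem exists_isSlice_away_iff_exists_isPrinciplePair {β : A →ₐ[k] A[X]} {h : A}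
    (hinv : β h = C h) [IsLocalization.Away h S] {βS : S →ₐ[k] S[X]}
    (hext : ∀ a : A, βS (algebraMap A S a) = (β a).map (algebraMap A S)) :
    (∃ s, IsSlice βS s) ↔ ∃ (g : A) (e : ℕ), IsPrinciplePair β g (h ^ e) := by
  have inv_pow (e : ℕ) : βS (algebraMap A S h ^ e) = C (algebraMap A S h ^ e) := by
    rw [map_pow, hext, hinv, map_C, C_pow]
  constructor
  · rintro ⟨s, hs⟩
    obtain ⟨e, g, hg⟩ := IsLocalization.Away.surj h s
    have pair_in_S : (β g).map (algebraMap A S) = (C g + X * C (h ^ e)).map (algebraMap A S) := by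
      rw [← hext, ← hg, map_mul, inv_pow, hs, Polynomial.map_add, Polynomial.map_mul, map_C, map_C,
        map_X, ← hg, map_pow (algebraMap A S), C_mul, add_mul]
    obtain ⟨n, hn⟩ := exists_C_pow_mul_eq_of_map_algebraMap_eq h pair_in_S
    refine ⟨h ^ n * g, n + e, ?_⟩
    rw [IsPrinciplePair, map_mul, map_pow, hinv, ← C_pow, hn, pow_add, C_mul, C_mul]
    ring
  · rintro ⟨g, e, hg⟩
    obtain ⟨u, hu⟩ := (IsLocalization.Away.algebraMap_isUnit (S := S) h).pow e
    have pair_in_S : IsPrinciplePair βS (algebraMap A S g) u := by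
      rw [IsPrinciplePair, hext, hg, hu]
      simp
    exact ⟨_, pair_in_S.isSlice_mul_inv (hu ▸ inv_pow e)⟩

end Localization

theorem stmt13_general {k A : Type*} [CommSemiring k] [CommSemiring A] [Algebra k A]
    (β : A →ₐ[k] A[X]) (h : A) (hinv : β h = C h)
    (S : Type*) [CommRing S] [Algebra A S] [Algebra k S] [IsLocalization.Away h S]
    (βS : S →ₐ[k] S[X]) (hβS : IsGaCoaction βS)
    (hext : ∀ a : A, βS (algebraMap A S a) = (β a).map (algebraMap A S)) :
    (∃ φ : (gaInvariants βS)[X] ≃ₐ[k] S,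
      (∀ x : gaInvariants βS, φ (C x) = x) ∧ βS (φ X) = C (φ X) + X) ↔
    ∃ (g : A) (e : ℕ), β g = C g + X * C (h ^ e) :=
  hβS.exists_algEquiv_iff_exists_isSlice.trans
    (exists_isSlice_away_iff_exists_isPrinciplePair hinv hext)

/-- local triviality criterion: `D(h)` is a trivial
`𝔾ₐ`-bundle over `D(h)//𝔾ₐ` — i.e. there is a `k`-algebra isomorphism
`(A_h)^{𝔾ₐ}[T] ≃ A_h` restricting to the inclusion of the invariants and with
`β_h(φ(T)) = φ(T) + t` — iff there is a principle pair `(g, h^e)`. -/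
theorem stmt13 {k : Type*} [Field k] [IsAlgClosed k]
    {A : Type*} [CommRing A] [IsDomain A] [Algebra k A]
    (hfg : Algebra.FiniteType k A)
    (β : A →ₐ[k] Polynomial A) (hβ : IsGaCoaction β)
    (h : A) (hh0 : h ≠ 0) (hinv : β h = Polynomial.C h)
    (S : Type*) [CommRing S] [Algebra A S] [Algebra k S] [IsScalarTower k A S]
    [IsLocalization.Away h S]
    (βS : S →ₐ[k] Polynomial S) (hβS : IsGaCoaction βS)
    (hext : ∀ a : A, βS (algebraMap A S a) = (β a).map (algebraMap A S)) :
    (∃ φ : Polynomial ↥(AlgHom.equalizer βS (Polynomial.CAlgHom (R := k) (A := S)))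
        ≃ₐ[k] S,
      (∀ x : ↥(AlgHom.equalizer βS (Polynomial.CAlgHom (R := k) (A := S))),
        φ (Polynomial.C x) = (x : S)) ∧
      βS (φ Polynomial.X) = Polynomial.C (φ Polynomial.X) + Polynomial.X) ↔
    (∃ (g : A) (e : ℕ),
      β g = Polynomial.C g + Polynomial.X * Polynomial.C (h ^ e)) :=
  stmt13_general β h hinv S βS hβS hext
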